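/- arXiv:2308.11445 — 5 statements merged into one kernel-verified Lean document; each statement's English description precedes it below -/
import Mathlib

section
/- Let F(x,y) be the free group on two generators x, y, let γ : F(x,y) → ℤ × ℤ be the homomorphism with γ(x) = (1,0), γ(y) = (0,1), and let B = [x,y⁻¹] = x y⁻¹ x⁻¹ y. Then every element R ∈ F(x,y) with γ(R) = (0,0) can be written as a finite product R = ∏ᵢ (x^{eᵢ} y^{fᵢ} B^{tᵢ} y^{-fᵢ} x^{-eᵢ}) with eᵢ, fᵢ, tᵢ ∈ ℤ; that is, ker γ is the subgroup of F(x,y) generated by the set { x^{e} y^{f} B^{t} y^{-f} x^{-e} | e, f, t ∈ ℤ }. -/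
/-!
Let `N` be the subgroup generated by all `x ^ e * y ^ f * ⁅x, y⁻¹⁆ ^ t * y ^ (-f) * x ^ (-e)`.
Moving a letter `x` to the left past `y ^ b` in `x ^ a * y ^ b * x` costs the factor
`x ^ a * ⁅y ^ b, x⁆ * x ^ (-a)`, which telescopes into a product of conjugates of `⁅x, y⁻¹⁆` or its
inverse and so lies in `N`. Hence every element is congruent to some `x ^ c * y ^ d` modulo `N`, and
a homomorphism to a commutative group that kills the element but keeps the images of `x` and `y`
independent forces `c = d = 0`.
-/

section TwoGenerators

open Subgroup
open scoped commutatorElement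

variable {G A : Type*} [Group G] [CommGroup A]

/-- The conjugates of powers of `⁅x, y⁻¹⁆` by the elements `x ^ e * y ^ f`. When `x` and `y`
generate the group, the `x ^ e * y ^ f` represent all cosets of the subgroup generated by these
conjugates, so that no other conjugators are needed. -/
def commutatorConjugates (x y : G) : Set G :=
  {w | ∃ e f t : ℤ, w = x ^ e * y ^ f * ⁅x, y⁻¹⁆ ^ t * y ^ (-f) * x ^ (-e)}

theorem closure_commutatorConjugates_le_ker (γ : G →* A) (x y : G) :
    closure (commutatorConjugates x y) ≤ γ.ker := by
  rw [closure_le]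
  rintro _ ⟨e, f, t, rfl⟩
  have map_commutator : γ ⁅x, y⁻¹⁆ = 1 := by
    rw [map_commutatorElement, commutatorElement_eq_one_iff_commute]
    exact Commute.all _ _
  simp [MonoidHom.mem_ker, map_commutator]

theorem zpow_mul_commutator_mul_zpow_neg_mem_closure (x y : G) (e f : ℤ) :
    x ^ e * y ^ f * ⁅x, y⁻¹⁆ * y ^ (-f) * x ^ (-e) ∈ closure (commutatorConjugates x y) :=
  subset_closure ⟨e, f, 1, by rw [zpow_one]⟩

theorem conj_commutator_zpow_add_one (x y : G) (a b : ℤ) :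
    x ^ a * ⁅y ^ (b + 1), x⁆ * x ^ (-a) =
      x ^ a * y ^ (b + 1) * ⁅x, y⁻¹⁆ * y ^ (-(b + 1)) * x ^ (-a) *
        (x ^ a * ⁅y ^ b, x⁆ * x ^ (-a)) := by
  simp only [commutatorElement_def]
  group

theorem conj_commutator_zpow_mem_closure (x y : G) (a b : ℤ) :
    x ^ a * ⁅y ^ b, x⁆ * x ^ (-a) ∈ closure (commutatorConjugates x y) := by
  have mem_iff (b : ℤ) : x ^ a * ⁅y ^ (b + 1), x⁆ * x ^ (-a) ∈ closure (commutatorConjugates x y) ↔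
      x ^ a * ⁅y ^ b, x⁆ * x ^ (-a) ∈ closure (commutatorConjugates x y) := by
    rw [conj_commutator_zpow_add_one]
    exact mul_mem_cancel_left (zpow_mul_commutator_mul_zpow_neg_mem_closure x y a (b + 1))
  induction b with
  | zero => simp
  | succ b ih => exact (mem_iff b).2 ih
  | pred b ih => exact (mem_iff (-b - 1)).1 (by rwa [sub_add_cancel])

theorem exists_eq_mul_zpow_mul_zpow {x y : G} (hxy : closure {x, y} = ⊤) (w : G) :
    ∃ h ∈ closure (commutatorConjugates x y), ∃ c d : ℤ, w = h * (x ^ c * y ^ d) := by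
  have hw : w ∈ closure {x, y} := hxy ▸ mem_top w
  induction hw using closure_induction_right with
  | one => exact ⟨1, one_mem _, 0, 0, by simp⟩
  | mul_right w _ z hz ih =>
    obtain ⟨h, hh, c, d, rfl⟩ := ih
    rcases hz with rfl | rfl
    · refine ⟨_, mul_mem hh (conj_commutator_zpow_mem_closure z y c d), c + 1, d, ?_⟩
      simp only [commutatorElement_def]
      group
    · exact ⟨h, hh, c, d + 1, by group⟩
  | mul_inv_cancel w _ z hz ih =>
    obtain ⟨h, hh, c, d, rfl⟩ := ih
    rcases hz with rfl | rfl
    · refine ⟨_, mul_mem hh (inv_mem (conj_commutator_zpow_mem_closure z y (c - 1) d)),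
        c - 1, d, ?_⟩
      simp only [commutatorElement_def]
      group
    · exact ⟨h, hh, c, d - 1, by group⟩

theorem stmt13_general {x y : G} (hxy : closure {x, y} = ⊤) (γ : G →* A)
    (hγ : ∀ c d : ℤ, γ x ^ c * γ y ^ d = 1 → c = 0 ∧ d = 0) :
    γ.ker = closure (commutatorConjugates x y) := by
  refine le_antisymm (fun w hw => ?_) (closure_commutatorConjugates_le_ker γ x y)
  obtain ⟨h, hh, c, d, rfl⟩ := exists_eq_mul_zpow_mul_zpow hxy w
  have map_h : γ h = 1 := closure_commutatorConjugates_le_ker γ x y hh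
  have map_zpow_mul_zpow : γ x ^ c * γ y ^ d = 1 := by
    simpa only [MonoidHom.mem_ker, map_mul, map_zpow, map_h, one_mul] using hw
  obtain ⟨rfl, rfl⟩ := hγ c d map_zpow_mul_zpow
  simpa only [zpow_zero, mul_one] using hh

end TwoGenerators

theorem closure_of_true_of_false_eq_top :
    Subgroup.closure {FreeGroup.of true, FreeGroup.of false} = (⊤ : Subgroup (FreeGroup Bool)) := by
  rw [Set.pair_comm, ← Bool.range_eq, FreeGroup.closure_range_of]

theorem eq_zero_of_ofAdd_zpow_mul_ofAdd_zpow_eq_one (c d : ℤ)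
    (h : Multiplicative.ofAdd ((1, 0) : ℤ × ℤ) ^ c * Multiplicative.ofAdd (0, 1) ^ d = 1) :
    c = 0 ∧ d = 0 := by
  simpa [← ofAdd_zsmul, ← ofAdd_add] using h

/-- With `γ : F(x,y) → ℤ × ℤ` the abelianization homomorphism and
`B = [x,y⁻¹]`, the kernel of `γ` is generated by the conjugates `x^e y^f B^t y^(-f) x^(-e)`. -/
theorem stmt13 (γ : FreeGroup Bool →* Multiplicative (ℤ × ℤ))
    (hx : γ (FreeGroup.of true) = Multiplicative.ofAdd (1, 0))
    (hy : γ (FreeGroup.of false) = Multiplicative.ofAdd (0, 1)) :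
    γ.ker = Subgroup.closure
      {w : FreeGroup Bool | ∃ e f t : ℤ,
        w = (FreeGroup.of true) ^ e * (FreeGroup.of false) ^ f *
          (FreeGroup.of true * (FreeGroup.of false)⁻¹ * (FreeGroup.of true)⁻¹ *
            FreeGroup.of false) ^ t *
          (FreeGroup.of false) ^ (-f) * (FreeGroup.of true) ^ (-e)} := by
  simpa only [commutatorConjugates, commutatorElement_def, inv_inv] using
    stmt13_general closure_of_true_of_false_eq_top γ
      (by simpa only [hx, hy] using eq_zero_of_ofAdd_zpow_mul_ofAdd_zpow_eq_one)
end

section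
/- Let F(x,y) be the free group on x, y, let γ : F(x,y) → ℤ × ℤ be the homomorphism with γ(x) = (1,0), γ(y) = (0,1), and let B = [x,y⁻¹]. Suppose ℰ : ker γ → ℤ is a group homomorphism such that ℰ(w B w⁻¹) = 1 for every w ∈ F(x,y). Then for every n ∈ ℤ the element (B x⁻¹)ⁿ xⁿ lies in ker γ and ℰ((B x⁻¹)ⁿ xⁿ) = n. -/
/-!
Put `uₙ = (B x⁻¹)ⁿ xⁿ`. Then `u₀ = 1` and `uₙ₊₁ = uₙ · (x⁻ⁿ B xⁿ)` for every integer `n`, so `uₙ`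
is a product of `n` conjugates of `B` by powers of `x` (of `-n` inverses of such conjugates if
`n < 0`). To follow the membership of `uₙ` in the domain of a homomorphism `φ` together with the
value `φ uₙ`, the same recursion is run inside the graph of `φ`, with `(B, c)` and `(x, 1)` in place
of `B` and `x`.
-/

section

variable {G A : Type*} [Group G] [Group A]

theorem mul_inv_zpow_add_one_mul_zpow_add_one (b x : G) (n : ℤ) :
    (b * x⁻¹) ^ (n + 1) * x ^ (n + 1) =
      (b * x⁻¹) ^ n * x ^ n * (x ^ (-n) * b * (x ^ (-n))⁻¹) := by
  rw [zpow_add_one, add_comm n 1, zpow_one_add x]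
  group

theorem mul_inv_zpow_mul_zpow_mem {K : Subgroup G} {b x : G}
    (hK : ∀ k : ℤ, x ^ k * b * (x ^ k)⁻¹ ∈ K) (n : ℤ) : (b * x⁻¹) ^ n * x ^ n ∈ K := by
  have mem_succ_iff (m : ℤ) :
      (b * x⁻¹) ^ (m + 1) * x ^ (m + 1) ∈ K ↔ (b * x⁻¹) ^ m * x ^ m ∈ K := by
    rw [mul_inv_zpow_add_one_mul_zpow_add_one, K.mul_mem_cancel_right (hK (-m))]
  induction n using Int.induction_on with
  | zero => simp
  | succ i ih => exact (mem_succ_iff i).2 ih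
  | pred i ih => exact (mem_succ_iff (-i - 1)).1 (by rwa [sub_add_cancel])

theorem mem_range_subtype_prod_iff {H : Subgroup G} {φ : H →* A} {g : G} {a : A} :
    (g, a) ∈ (H.subtype.prod φ).range ↔ ∃ h : g ∈ H, φ ⟨g, h⟩ = a := by
  simp [MonoidHom.mem_range, Subtype.exists]

theorem conj_commutator_mem_ker {M : Type*} [CommGroup M] (γ : G →* M) (w x y : G) :
    w * (x * y⁻¹ * x⁻¹ * y) * w⁻¹ ∈ γ.ker := by
  simp [MonoidHom.mem_ker, mul_right_comm (γ x)]

theorem stmt15_general {H : Subgroup G} {φ : H →* A} {b x : G} {c : A}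
    (hφ : ∀ k : ℤ, ∃ h : x ^ k * b * (x ^ k)⁻¹ ∈ H, φ ⟨_, h⟩ = c) (n : ℤ) :
    ∃ h : (b * x⁻¹) ^ n * x ^ n ∈ H, φ ⟨_, h⟩ = c ^ n := by
  have conj_mem_graph (k : ℤ) :
      (x, (1 : A)) ^ k * (b, c) * ((x, (1 : A)) ^ k)⁻¹ ∈ (H.subtype.prod φ).range := by
    simpa [mem_range_subtype_prod_iff] using hφ k
  simpa [mem_range_subtype_prod_iff] using mul_inv_zpow_mul_zpow_mem conj_mem_graph n

end

/-- If `ℰ : ker γ → ℤ` is a homomorphism sending every conjugate `w B w⁻¹`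
of `B = [x,y⁻¹]` to `1`, then `ℰ((B x⁻¹)ⁿ xⁿ) = n` for every integer `n`. -/
theorem stmt15 (γ : FreeGroup Bool →* Multiplicative (ℤ × ℤ))
    (hx : γ (FreeGroup.of true) = Multiplicative.ofAdd (1, 0))
    (hy : γ (FreeGroup.of false) = Multiplicative.ofAdd (0, 1))
    (ℰ : γ.ker →* Multiplicative ℤ)
    (hℰ : ∀ (w : FreeGroup Bool)
      (h : w * (FreeGroup.of true * (FreeGroup.of false)⁻¹ * (FreeGroup.of true)⁻¹ *
          FreeGroup.of false) * w⁻¹ ∈ γ.ker),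
      ℰ ⟨_, h⟩ = Multiplicative.ofAdd (1 : ℤ)) :
    ∀ n : ℤ, ∃ h : ((FreeGroup.of true * (FreeGroup.of false)⁻¹ * (FreeGroup.of true)⁻¹ *
        FreeGroup.of false) * (FreeGroup.of true)⁻¹) ^ n * (FreeGroup.of true) ^ n ∈ γ.ker,
      ℰ ⟨_, h⟩ = Multiplicative.ofAdd n := by
  simpa only [← ofAdd_zsmul, smul_eq_mul, mul_one] using
    stmt15_general fun k ↦ ⟨conj_commutator_mem_ker γ _ _ _, hℰ (FreeGroup.of true ^ k) _⟩
end

section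
/- Let T³ = (ℝ/ℤ)³, let pr₃ : T³ → ℝ/ℤ be the third projection, and let τ₁ : T³ → T³ be the free involution τ₁(x,y,z) = (x + 1/2, y, z). Then for every continuous map f : T³ → T³ with pr₃∘f = pr₃, there exist a continuous map g : T³ → T³ with pr₃∘g = pr₃ and a continuous homotopy H : T³ × [0,1] → T³ with H(·,0) = f, H(·,1) = g and pr₃(H(w,t)) = pr₃(w) for all w,t, such that g(τ₁(w)) ≠ g(w) for all w ∈ T³. In other words, no homotopy class over S¹ = ℝ/ℤ of fiber-preserving self-maps of the trivial 2-torus bundle pr₃ : T³ → S¹ has the Borsuk–Ulam property with respect to τ₁. -/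
open unitInterval

/-- The 3-torus `(ℝ/ℤ)³`. -/
abbrev Torus3 : Type := UnitAddCircle × UnitAddCircle × UnitAddCircle

/-!
A self-map `τ` homotopic to the identity makes `f ∘ τ` homotopic to `f`, so for `f : X → A` the
difference `f ∘ τ - f` lifts through a covering homomorphism `π : E → A` to some `h : X → E`.
If `τ` is an involution, then `h + h ∘ τ` takes values in `ker π`. Translating `f` by `π ∘ u`,
with `u = (h - h ∘ τ + c) / 4` and `c` odd, turns the difference into one that lifts to
`(h + h ∘ τ - c) / 2`. Where the new difference vanishes, twice this lift lies in `ker π`, hence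
so does `c`; as `ker π` is discrete, a small `c` must vanish there. On a torus fibre, taking for `c`
in the two circle factors the two coordinates of an odd nowhere vanishing map to the plane removes
every coincidence; on `T³` with `τ₁`, the map `(x, y, z) ↦ exp (2πix)` is odd and nowhere zero.
-/

section Lifting

variable {X E A : Type*} [TopologicalSpace X] [TopologicalSpace E] [TopologicalSpace A]

theorem exists_lift_sub_of_homotopic [AddGroup E] [AddGroup A] [ContinuousSub A] {π : E →+ A}
    (hπ : IsCoveringMap π) {f₀ f₁ : C(X, A)} (hf : f₀.Homotopic f₁) :
    ∃ h : C(X, E), ∀ x, π (h x) = f₁ x - f₀ x := by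
  obtain ⟨F⟩ := hf
  let D : C(I × X, A) := F.toContinuousMap - f₀.comp .snd
  have hD_zero (x : X) : D (0, x) = π (ContinuousMap.const X 0 x) := by simp [D]
  refine ⟨(hπ.liftHomotopy D _ hD_zero).comp (.prodMk (.const X 1) (.id X)), fun x => ?_⟩
  calc π (hπ.liftHomotopy D _ hD_zero (1, x))
    _ = D (1, x) := congr_fun (hπ.liftHomotopy_lifts D _ hD_zero) (1, x)
    _ = f₁ x - f₀ x := by simp [D]

theorem id_homotopic_addRight [AddMonoid A] [ContinuousAdd A] [PathConnectedSpace A] (a : A) :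
    (ContinuousMap.id A).Homotopic (ContinuousMap.addRight a) := by
  obtain ⟨γ⟩ := PathConnectedSpace.joined (0 : A) a
  exact ⟨{ toFun := fun p => p.2 + γ p.1
           map_zero_left := by simp
           map_one_left := by simp }⟩

end Lifting

section Perturbation

variable {X E A : Type*} [TopologicalSpace X] [NormedAddCommGroup E]

theorem exists_norm_lt_imp_eq_zero_of_isLocallyInjective [AddGroup A] {π : E →+ A}
    (hπ : IsLocallyInjective π) : ∃ ε > 0, ∀ v, ‖v‖ < ε → π v = 0 → v = 0 := by
  obtain ⟨U, hU, hU_zero, hU_inj⟩ := hπ 0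
  obtain ⟨ε, hε, hεU⟩ := Metric.isOpen_iff.1 hU 0 hU_zero
  refine ⟨ε, hε, fun v hv hπv => hU_inj (hεU ?_) hU_zero (hπv.trans π.map_zero.symm)⟩
  simpa using hv

variable [NormedSpace ℝ E]

theorem exists_odd_norm_lt {τ : X → X} (c : C(X, E)) (hc : ∀ x, c (τ x) = -c x) {ε : ℝ}
    (hε : 0 < ε) :
    ∃ b : C(X, E), (∀ x, b (τ x) = -b x) ∧ (∀ x, ‖b x‖ < ε) ∧ ∀ x, b x = 0 → c x = 0 := by
  have h_pos (x : X) : 0 < 1 + ‖c x‖ := by positivity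
  refine ⟨⟨fun x => (ε / (1 + ‖c x‖)) • c x, ?_⟩, fun x => ?_, fun x => ?_, fun x hx => ?_⟩
  · fun_prop (disch := exact fun x => (h_pos x).ne')
  · simp [hc]
  · calc ‖(ε / (1 + ‖c x‖)) • c x‖
      _ = ε * (‖c x‖ / (1 + ‖c x‖)) := by
        rw [norm_smul, Real.norm_of_nonneg (by positivity)]; ring
      _ < ε * 1 := by gcongr; rw [div_lt_one (h_pos x)]; linarith
      _ = ε := mul_one ε
  · exact (smul_eq_zero.1 hx).resolve_left (div_pos hε (h_pos x)).ne'

theorem exists_translate_coincidence_imp_eq_zero [AddCommGroup A] [TopologicalSpace A]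
    [IsTopologicalAddGroup A] {π : E →+ A} (hπ : IsCoveringMap π) {τ : C(X, X)}
    (hτ : Function.Involutive τ) (hτ_id : (ContinuousMap.id X).Homotopic τ) (f : C(X, A))
    (c : C(X, E)) (hc : ∀ x, c (τ x) = -c x) :
    ∃ u : C(X, E), ∀ x, f (τ x) + π (u (τ x)) = f x + π (u x) → c x = 0 := by
  obtain ⟨h, hh⟩ : ∃ h : C(X, E), ∀ x, π (h x) = f (τ x) - f x :=
    exists_lift_sub_of_homotopic hπ ((ContinuousMap.Homotopic.refl f).comp hτ_id)
  obtain ⟨ε, hε, hker⟩ := exists_norm_lt_imp_eq_zero_of_isLocallyInjective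
    hπ.isLocalHomeomorph.isLocallyInjective
  obtain ⟨b, hb_odd, hb_lt, hb_zero⟩ := exists_odd_norm_lt c hc hε
  let u : C(X, E) := (4⁻¹ : ℝ) • (h - h.comp τ + b)
  refine ⟨u, fun x hx => hb_zero x (hker _ (hb_lt x) ?_)⟩
  have h_sum : π (h x + h (τ x)) = 0 := by
    rw [map_add, hh, hh, hτ]; abel
  have h_diff : π (h x + u (τ x) - u x) = 0 :=
    calc π (h x + u (τ x) - u x)
      _ = f (τ x) + π (u (τ x)) - (f x + π (u x)) := by rw [map_sub, map_add, hh]; abel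
      _ = 0 := sub_eq_zero.2 hx
  have h_double : b x = h x + h (τ x) - 2 • (h x + u (τ x) - u x) := by
    simp only [u, ContinuousMap.smul_apply, ContinuousMap.add_apply, ContinuousMap.sub_apply,
      ContinuousMap.comp_apply, hτ x, hb_odd]
    module
  rw [h_double, map_sub, map_nsmul, h_sum, h_diff, nsmul_zero, sub_zero]

end Perturbation

theorem stmt16_general {X B : Type*} [TopologicalSpace X] [TopologicalSpace B] {p q : ℝ}
    {τ : C(X, X)} (hτ : Function.Involutive τ) (hτ_id : (ContinuousMap.id X).Homotopic τ)
    (c : C(X, ℂ)) (hc_odd : ∀ x, c (τ x) = -c x) (hc_ne : ∀ x, c x ≠ 0) {pr : X → B}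
    (f : X → AddCircle p × AddCircle q × B) (hf : Continuous f) (hf_pr : ∀ x, (f x).2.2 = pr x) :
    ∃ (g : X → AddCircle p × AddCircle q × B) (H : X × I → AddCircle p × AddCircle q × B),
      Continuous g ∧ (∀ x, (g x).2.2 = pr x) ∧
      Continuous H ∧ (∀ x, H (x, 0) = f x) ∧ (∀ x, H (x, 1) = g x) ∧
      (∀ x t, (H (x, t)).2.2 = pr x) ∧
      ∀ x, g (τ x) ≠ g x := by
  obtain ⟨u, hu⟩ := exists_translate_coincidence_imp_eq_zero
    (π := QuotientAddGroup.mk' _) (AddCircle.isCoveringMap_coe p) hτ hτ_id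
    ⟨fun x => (f x).1, by fun_prop⟩ ⟨fun x => (c x).re, by fun_prop⟩ (by simp [hc_odd])
  obtain ⟨v, hv⟩ := exists_translate_coincidence_imp_eq_zero
    (π := QuotientAddGroup.mk' _) (AddCircle.isCoveringMap_coe q) hτ hτ_id
    ⟨fun x => (f x).2.1, by fun_prop⟩ ⟨fun x => (c x).im, by fun_prop⟩ (by simp [hc_odd])
  have _ := AddCircle.continuous_mk' p
  have _ := AddCircle.continuous_mk' q
  let H : X × I → AddCircle p × AddCircle q × B := fun w =>
    ((f w.1).1 + ((w.2 * u w.1 : ℝ) : AddCircle p),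
      (f w.1).2.1 + ((w.2 * v w.1 : ℝ) : AddCircle q), (f w.1).2.2)
  have hH : Continuous H := by fun_prop
  refine ⟨fun x => H (x, 1), H, by fun_prop, hf_pr, hH, fun x => by simp [H], fun _ => rfl,
    fun x _ => hf_pr x, fun x hx => hc_ne x (Complex.ext (hu x ?_) (hv x ?_))⟩
  · simpa [H] using congrArg Prod.fst hx
  · simpa [H] using congrArg (fun y => y.2.1) hx

/-- The free involution `τ₁(x, y, z) = (x + 1/2, y, z)` of the 3-torus, as a continuous map. -/
noncomputable def tauOne : C(Torus3, Torus3) :=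
  (ContinuousMap.addRight ((1 / 2 : ℝ) : UnitAddCircle)).prodMap (.id _)

theorem tauOne_involutive : Function.Involutive tauOne := by
  have h_one : ((1 / 2 : ℝ) : UnitAddCircle) + ((1 / 2 : ℝ) : UnitAddCircle) = 0 := by
    rw [← AddCircle.coe_add, add_halves, AddCircle.coe_period]
  refine Function.Involutive.prodMap (fun x => ?_) fun _ => rfl
  calc x + ((1 / 2 : ℝ) : UnitAddCircle) + ((1 / 2 : ℝ) : UnitAddCircle)
    _ = x := by rw [add_assoc, h_one, add_zero]

theorem id_homotopic_tauOne : (ContinuousMap.id Torus3).Homotopic tauOne :=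
  ContinuousMap.Homotopic.prodMap (f₀ := .id _) (g₀ := .id _) (id_homotopic_addRight _) (.refl _)

theorem toCircle_add_half (x : UnitAddCircle) :
    ((x + ((1 / 2 : ℝ) : UnitAddCircle)).toCircle : ℂ) = -x.toCircle := by
  have h_half : 2 * Real.pi / 1 * (1 / 2) = Real.pi := by ring
  rw [AddCircle.toCircle_add, AddCircle.toCircle_apply_mk, h_half, Circle.coe_mul, Circle.coe_exp,
    Complex.exp_pi_mul_I, mul_neg_one]

/-- No homotopy class over `S¹` of fiber-preserving self-maps of the trivial
2-torus bundle `pr₃ : T³ → S¹` has the Borsuk–Ulam property with respect to the free involution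
`τ₁(x,y,z) = (x + 1/2, y, z)`: every fiber-preserving map is homotopic over `S¹` to a
coincidence-free one. -/
theorem stmt16 :
    ∀ f : Torus3 → Torus3, Continuous f → (∀ w, (f w).2.2 = w.2.2) →
      ∃ (g : Torus3 → Torus3) (H : Torus3 × I → Torus3),
        Continuous g ∧ (∀ w, (g w).2.2 = w.2.2) ∧
        Continuous H ∧ (∀ w, H (w, 0) = f w) ∧ (∀ w, H (w, 1) = g w) ∧
        (∀ w t, (H (w, t)).2.2 = w.2.2) ∧
        ∀ w : Torus3,
          g (w.1 + ((1 / 2 : ℝ) : UnitAddCircle), w.2.1, w.2.2) ≠ g w := by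
  intro f hf hpr
  exact stmt16_general tauOne_involutive id_homotopic_tauOne
    ⟨fun w => w.1.toCircle, by fun_prop⟩
    (fun w => toCircle_add_half w.1) (fun w => w.1.toCircle.coe_ne_zero) f hf hpr
end

section
/- Let T² = (ℝ/ℤ)², T³ = (ℝ/ℤ)³ with third projection pr₃. For j ∈ {1,2}, let τ_j : T³ → T³ be the free involutions τ₁(x,y,z) = (x + 1/2, y, z) and τ₂(x,y,z) = (x + 1/2, 1/2 − y, z), and let τ̄_j : T² → T² be the free involutions τ̄₁(x,y) = (x + 1/2, y) and τ̄₂(x,y) = (x + 1/2, 1/2 − y). Let f : T³ → T³ be continuous with pr₃∘f = pr₃, and define f̄ : T² → T² by f̄(x,y) = (f₁(x,y,0), f₂(x,y,0)), where f(x,y,0) = (f₁(x,y,0), f₂(x,y,0), 0). Then the homotopy class of f over S¹ = ℝ/ℤ has the Borsuk–Ulam property with respect to τ_j (every g homotopic to f through maps over S¹ satisfies g(τ_j(w)) = g(w) for some w ∈ T³) if and only if the free homotopy class of f̄ has the Borsuk–Ulam property with respect to τ̄_j (every continuous h : T² → T² homotopic to f̄ satisfies h(τ̄_j(u)) = h(u)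 for some u ∈ T²). -/
/-!
In trivial bundles over `S¹`, a map over `S¹` is the same as a map `F : X × S¹ → Y` to the fiber.
If `X` is connected and the topological group `Y` has a contractible covering space, the difference
between `F (x, z)` and `F (x, 0) - F (x₀, 0) + F (x₀, z)` is constant on `X × {0}` and
`{x₀} × S¹`, so it lifts to the covering space and is nullhomotopic. Hence `F` is homotopic to
`F (x, 0) + φ z` for some `φ : S¹ → Y`. A deformation `h` of the restriction `F (·, 0)` therefore
gives the deformation `h x + φ z` of `F`, and the two have the same coincidences because `φ z`
cancels from `h (τ x) + φ z = h x + φ z`. Conversely, a deformation of `F` restricts to one of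
`F (·, 0)`.
-/

open unitInterval

/-- The 2-torus `(ℝ/ℤ)²`. -/
abbrev Torus2 : Type := UnitAddCircle × UnitAddCircle

section Covering

variable {E E' X X' : Type*} [TopologicalSpace E] [TopologicalSpace E'] [TopologicalSpace X]
  [TopologicalSpace X']

theorem isEvenlyCovered_prodMap {p : E → X} {p' : E' → X'} {x : X} {x' : X'} {F F' : Type*}
    [TopologicalSpace F] [TopologicalSpace F'] (h : IsEvenlyCovered p x F)
    (h' : IsEvenlyCovered p' x' F') :
    IsEvenlyCovered (Prod.map p p') (x, x') (F × F') := by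
  obtain ⟨_, U, hxU, hU, hpU, φ, hφ⟩ := h
  obtain ⟨_, U', hxU', hU', hpU', φ', hφ'⟩ := h'
  let Φ : (p ⁻¹' U) ×ˢ (p' ⁻¹' U') ≃ₜ (U ×ˢ U' : Set (X × X')) × (F × F') :=
    (Homeomorph.Set.prod _ _).trans <| (φ.prodCongr φ').trans <|
      (Homeomorph.prodProdProdComm _ _ _ _).trans <|
        (Homeomorph.Set.prod U U').symm.prodCongr (.refl _)
  exact ⟨inferInstance, U ×ˢ U', ⟨hxU, hxU'⟩, hU.prod hU', hpU.prod hpU', Φ,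
    fun e => Prod.ext (hφ ⟨e.1.1, e.2.1⟩) (hφ' ⟨e.1.2, e.2.2⟩)⟩

theorem isCoveringMap_prodMap {p : E → X} {p' : E' → X'} (hp : IsCoveringMap p)
    (hp' : IsCoveringMap p') : IsCoveringMap (Prod.map p p') := fun x =>
  (isEvenlyCovered_prodMap (hp x.1) (hp' x.2)).to_isEvenlyCovered_preimage

end Covering

section Cylinder

theorem isQuotientMap_prodMap_id (X : Type*) {A B : Type*} [TopologicalSpace X]
    [TopologicalSpace A] [TopologicalSpace B] [CompactSpace A] [T2Space B] {q : A → B}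
    (hq : Continuous q) (hsurj : q.Surjective) :
    Topology.IsQuotientMap (Prod.map id q : X × A → X × B) :=
  ((Homeomorph.refl X).isProperMap.prodMap hq.isProperMap).isClosedMap.isQuotientMap
    (continuous_id.prodMap hq) (Function.surjective_id.prodMap hsurj)

theorem unitInterval_coe_surjective :
    Function.Surjective fun t : I => ((t : ℝ) : UnitAddCircle) := fun z => by
  obtain ⟨t, ht, rfl⟩ := (AddCircle.coe_image_Icc_eq (1 : ℝ) 0).symm ▸ Set.mem_univ z
  exact ⟨⟨t, by simpa using ht⟩, rfl⟩

theorem unitInterval_coe_eq_coe {s t : I}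
    (h : ((s : ℝ) : UnitAddCircle) = ((t : ℝ) : UnitAddCircle)) :
    s = t ∨ s = 0 ∧ t = 1 ∨ s = 1 ∧ t = 0 := by
  rw [← sub_eq_zero, ← AddCircle.coe_sub, AddCircle.coe_eq_zero_iff] at h
  obtain ⟨n, hn⟩ := h
  rw [zsmul_one] at hn
  have hlo : -1 ≤ n := by exact_mod_cast (by linarith [s.2.1, t.2.2] : (-1 : ℝ) ≤ n)
  have hhi : n ≤ 1 := by exact_mod_cast (by linarith [s.2.2, t.2.1] : (n : ℝ) ≤ 1)
  obtain rfl | rfl | rfl : n = -1 ∨ n = 0 ∨ n = 1 := by lia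
  · push_cast at hn
    exact .inr <| .inl ⟨Set.Icc.coe_eq_zero.1 (by linarith [s.2.1, t.2.2]),
      Set.Icc.coe_eq_one.1 (by linarith [s.2.1, t.2.2])⟩
  · push_cast at hn
    exact .inl <| Subtype.ext (by linarith)
  · push_cast at hn
    exact .inr <| .inr ⟨Set.Icc.coe_eq_one.1 (by linarith [s.2.2, t.2.1]),
      Set.Icc.coe_eq_zero.1 (by linarith [s.2.2, t.2.1])⟩

variable {X Z : Type*} [TopologicalSpace X] [TopologicalSpace Z]

theorem exists_continuousMap_prod_unitAddCircle (P : C(X × I, Z)) (hP : ∀ x, P (x, 0) = P (x, 1)) :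
    ∃ Q : C(X × UnitAddCircle, Z), ∀ x (t : I), Q (x, ((t : ℝ) : UnitAddCircle)) = P (x, t) := by
  let q : C(I, UnitAddCircle) :=
    ⟨fun t => ((t : ℝ) : UnitAddCircle), (AddCircle.continuous_mk' 1).comp continuous_subtype_val⟩
  have hq : Topology.IsQuotientMap ((ContinuousMap.id X).prodMap q) :=
    isQuotientMap_prodMap_id X q.continuous unitInterval_coe_surjective
  have hfactor : Function.FactorsThrough P ((ContinuousMap.id X).prodMap q) := by
    rintro ⟨x, s⟩ ⟨y, t⟩ h
    obtain ⟨rfl, hst⟩ : x = y ∧ q s = q t := Prod.mk.inj h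
    rcases unitInterval_coe_eq_coe hst with rfl | ⟨rfl, rfl⟩ | ⟨rfl, rfl⟩
    exacts [rfl, hP x, (hP x).symm]
  exact ⟨hq.lift P hfactor, fun x t => DFunLike.congr_fun (hq.lift_comp P hfactor) (x, t)⟩

variable {U Y : Type*} [TopologicalSpace U] [TopologicalSpace Y] {p : U → Y}

theorem exists_lift_of_const_on_axes [PreconnectedSpace X] (hp : IsCoveringMap p)
    (D : C(X × UnitAddCircle, Y)) (x₀ : X) (e : U) (hX : ∀ x, D (x, 0) = p e)
    (hS : ∀ z, D (x₀, z) = p e) : ∃ L : C(X × UnitAddCircle, U), p ∘ L = D := by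
  let H : C(I × X, Y) := D.comp ⟨fun a => (a.2, ((a.1 : ℝ) : UnitAddCircle)),
    continuous_snd.prodMk ((AddCircle.continuous_mk' 1).comp (by fun_prop))⟩
  have hH : ∀ x, H (0, x) = p (ContinuousMap.const X e x) := hX
  let M := hp.liftHomotopy H (.const X e) hH
  have hM : ∀ t x, p (M (t, x)) = D (x, ((t : ℝ) : UnitAddCircle)) := fun t x =>
    congr_fun (hp.liftHomotopy_lifts H _ hH) (t, x)
  have hM0 : ∀ x, M (0, x) = e := hp.liftHomotopy_zero H _ hH
  have hM1 : ∀ x, M (1, x) = e := fun x => calc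
    M (1, x) = M (1, x₀) := by
      refine hp.const_of_comp (g := fun x => M (1, x)) (by fun_prop) (fun a b => ?_) x x₀
      simp only [hM, Set.Icc.coe_one, AddCircle.coe_period, hX]
    _ = M (0, x₀) := by
      refine hp.const_of_comp (g := fun t => M (t, x₀)) (by fun_prop) (fun s t => ?_) 1 0
      simp only [hM, hS]
    _ = e := hM0 x₀
  obtain ⟨L, hL⟩ := exists_continuousMap_prod_unitAddCircle (M.comp .prodSwap)
    fun x => (hM0 x).trans (hM1 x).symm
  refine ⟨L, funext fun ⟨x, z⟩ => ?_⟩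
  obtain ⟨t, rfl⟩ := unitInterval_coe_surjective z
  exact (congrArg p (hL x t)).trans (hM t x)

theorem nullhomotopic_of_const_on_axes [PreconnectedSpace X] [ContractibleSpace U]
    (hp : IsCoveringMap p) (D : C(X × UnitAddCircle, Y)) (x₀ : X) (e : U)
    (hX : ∀ x, D (x, 0) = p e) (hS : ∀ z, D (x₀, z) = p e) : D.Nullhomotopic := by
  obtain ⟨L, hL⟩ := exists_lift_of_const_on_axes hp D x₀ e hX hS
  have hD : D = (⟨p, hp.continuous⟩ : C(U, Y)).comp L := DFunLike.coe_injective hL.symm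
  exact hD ▸ ((id_nullhomotopic U).comp_left L).comp_right _

theorem exists_homotopic_restrict_add [PreconnectedSpace X] [ContractibleSpace U] [AddGroup Y]
    [IsTopologicalAddGroup Y] (hp : IsCoveringMap p) (F : C(X × UnitAddCircle, Y)) (x₀ : X) :
    ∃ φ : C(UnitAddCircle, Y),
      F.Homotopic ((F.comp (.prodMk (.id X) (.const X 0))).comp .fst + φ.comp .snd) := by
  obtain ⟨e⟩ : Nonempty U := inferInstance
  let k : Y := F (x₀, 0) + p e
  let D : C(X × UnitAddCircle, Y) :=
    ⟨fun w => -F (w.1, 0) + F w - F (x₀, w.2) + k, by fun_prop⟩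
  obtain ⟨c, hc⟩ : D.Nullhomotopic := nullhomotopic_of_const_on_axes hp D x₀ e
    (fun x => by simp [D, k]) (fun z => by simp [D, k])
  let rebuild : C((X × UnitAddCircle) × Y, Y) :=
    ⟨fun a => F (a.1.1, 0) + a.2 - k + F (x₀, a.1.2), by fun_prop⟩
  refine ⟨⟨fun z => c - k + F (x₀, z), by fun_prop⟩, ?_⟩
  convert (ContinuousMap.Homotopic.refl rebuild).comp
    ((ContinuousMap.Homotopic.refl (.id _)).prodMk hc) using 1
  · ext w
    simp [rebuild, D, sub_eq_add_neg, add_assoc]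
  · ext w
    simp [rebuild, add_assoc, sub_eq_add_neg]

end Cylinder

section BorsukUlam

variable {X Y B E E' : Type*} [TopologicalSpace X] [TopologicalSpace Y] [TopologicalSpace B]
  [TopologicalSpace E] [TopologicalSpace E']

/-- The Borsuk–Ulam property of the free homotopy class of `f` with respect to a self-map `τ` of
its domain. Homotopies are unbundled and have their time parameter in the second factor. -/
def BorsukUlamProperty (τ : X → X) (f : X → Y) : Prop :=
  ∀ h : X → Y, Continuous h →
    (∃ K : X × I → Y, Continuous K ∧ (∀ u, K (u, 0) = f u) ∧ ∀ u, K (u, 1) = h u) →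
    ∃ u, h (τ u) = h u

/-- The Borsuk–Ulam property, with respect to a self-map `τ` of `E`, of the homotopy class of
`f : E → E'` over `B`, where `E` and `E'` lie over `B` by `π` and `π'`. -/
def BorsukUlamPropertyOver (π : E → B) (π' : E' → B) (τ : E → E) (f : E → E') : Prop :=
  ∀ g : E → E', Continuous g →
    (∃ H : E × I → E', Continuous H ∧ (∀ w, H (w, 0) = f w) ∧ (∀ w, H (w, 1) = g w) ∧
      ∀ w t, π' (H (w, t)) = π w) →
    ∃ w, g (τ w) = g w

theorem borsukUlamProperty_iff_homotopic (τ : X → X) (f : C(X, Y)) :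
    BorsukUlamProperty τ f ↔ ∀ h : C(X, Y), f.Homotopic h → ∃ u, h (τ u) = h u := by
  constructor
  · rintro hf h ⟨K⟩
    exact hf h h.continuous
      ⟨K ∘ Prod.swap, K.continuous.comp continuous_swap, K.apply_zero, K.apply_one⟩
  · rintro hf h hh ⟨K, hK, hK0, hK1⟩
    exact hf ⟨h, hh⟩ ⟨⟨⟨K ∘ Prod.swap, hK.comp continuous_swap⟩, hK0, hK1⟩⟩

theorem borsukUlamPropertyOver_iff_of_homeomorph_prod (e : E ≃ₜ X × B) (e' : E' ≃ₜ Y × B)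
    (τ : X → X) {f : E → E'} (hf : ∀ w, (e' (f w)).2 = (e w).2) :
    BorsukUlamPropertyOver (fun w => (e w).2) (fun w => (e' w).2)
        (fun w => e.symm (Prod.map τ id (e w))) f ↔
      BorsukUlamProperty (Prod.map τ id) fun v => (e' (f (e.symm v))).1 := by
  constructor
  · rintro hover g hg ⟨K, hK, hK0, hK1⟩
    obtain ⟨w, hw⟩ := hover (fun w => e'.symm (g (e w), (e w).2)) (by fun_prop)
      ⟨fun a => e'.symm (K (e a.1, a.2), (e a.1).2), by fun_prop,
        fun w => by simp [hK0, ← hf w], fun w => by simp [hK1], fun w t => by simp⟩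
    refine ⟨e w, ?_⟩
    simpa using congrArg (fun y => (e' y).1) hw
  · rintro hfiber g hg ⟨H, hH, hH0, hH1, hHover⟩
    obtain ⟨v, hv⟩ := hfiber (fun v => (e' (g (e.symm v))).1) (by fun_prop)
      ⟨fun a => (e' (H (e.symm a.1, a.2))).1, by fun_prop,
        fun v => by simp [hH0], fun v => by simp [hH1]⟩
    have hgover : ∀ w, (e' (g w)).2 = (e w).2 := fun w => hH1 w ▸ hHover w 1
    refine ⟨e.symm v, e'.injective (Prod.ext ?_ ?_)⟩
    · simpa using hv
    · simp [hgover]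

theorem borsukUlamProperty_prodMap_of_restrict {τ : X → X} (F : C(X × B, Y)) (b : B)
    (hF : BorsukUlamProperty τ (F.comp (.prodMk (.id X) (.const X b)))) :
    BorsukUlamProperty (Prod.map τ id) F := by
  rw [borsukUlamProperty_iff_homotopic] at hF ⊢
  intro G hFG
  obtain ⟨x, hx⟩ := hF _ (hFG.comp (.refl _))
  exact ⟨(x, b), hx⟩

theorem borsukUlamProperty_of_prodMap [Add Y] [ContinuousAdd Y] [IsRightCancelAdd Y] {τ : X → X}
    {F : C(X × B, Y)} {f : C(X, Y)} {φ : C(B, Y)} (hFf : F.Homotopic (f.comp .fst + φ.comp .snd))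
    (hF : BorsukUlamProperty (Prod.map τ id) F) : BorsukUlamProperty τ f := by
  rw [borsukUlamProperty_iff_homotopic] at hF ⊢
  intro h hfh
  let translate : C(Y × B, Y) := ⟨fun a => a.1 + φ a.2, by fun_prop⟩
  have hFh : F.Homotopic (h.comp .fst + φ.comp .snd) :=
    hFf.trans ((ContinuousMap.Homotopic.refl translate).comp (hfh.prodMap (.refl (.id B))))
  obtain ⟨⟨x, b⟩, hxb⟩ := hF _ hFh
  exact ⟨x, add_right_cancel hxb⟩

theorem borsukUlamProperty_prodMap_iff_restrict {U : Type*} [TopologicalSpace U]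
    [ContractibleSpace U] [ConnectedSpace X] [AddGroup Y] [IsTopologicalAddGroup Y] {p : U → Y}
    (hp : IsCoveringMap p) (τ : X → X) (F : C(X × UnitAddCircle, Y)) :
    BorsukUlamProperty (Prod.map τ id) F ↔
      BorsukUlamProperty τ (F.comp (.prodMk (.id X) (.const X 0))) := by
  obtain ⟨x₀⟩ : Nonempty X := inferInstance
  obtain ⟨φ, hφ⟩ := exists_homotopic_restrict_add hp F x₀
  exact ⟨borsukUlamProperty_of_prodMap hφ, borsukUlamProperty_prodMap_of_restrict F 0⟩

theorem stmt18_general {U : Type*} [TopologicalSpace U] [ContractibleSpace U] [ConnectedSpace X]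
    [AddGroup Y] [IsTopologicalAddGroup Y] {p : U → Y} (hp : IsCoveringMap p)
    (e : E ≃ₜ X × UnitAddCircle) (e' : E' ≃ₜ Y × UnitAddCircle) (τ : X → X) {f : E → E'}
    (hfc : Continuous f) (hfib : ∀ w, (e' (f w)).2 = (e w).2) :
    BorsukUlamPropertyOver (fun w => (e w).2) (fun w => (e' w).2)
        (fun w => e.symm (Prod.map τ id (e w))) f ↔
      BorsukUlamProperty τ fun x => (e' (f (e.symm (x, 0)))).1 :=
  (borsukUlamPropertyOver_iff_of_homeomorph_prod e e' τ hfib).trans <|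
    borsukUlamProperty_prodMap_iff_restrict hp τ ⟨fun v => (e' (f (e.symm v))).1, by fun_prop⟩

end BorsukUlam

theorem isCoveringMap_torus2 :
    IsCoveringMap (Prod.map (↑) (↑) : ℝ × ℝ → Torus2) :=
  isCoveringMap_prodMap (AddCircle.isCoveringMap_coe 1) (AddCircle.isCoveringMap_coe 1)

/-- For a fiber-preserving self-map `f` of the trivial 2-torus bundle
`T³ → S¹`, and for each of the free involutions `τ₁(x,y,z) = (x+1/2, y, z)` and
`τ₂(x,y,z) = (x+1/2, 1/2-y, z)` (with restrictions `τ̄₁(x,y) = (x+1/2,y)` and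
`τ̄₂(x,y) = (x+1/2, 1/2-y)` to the fiber `T²`), the homotopy class of `f` over `S¹` has the
Borsuk–Ulam property with respect to `τ_j` iff the free homotopy class of the restriction
`f̄` of `f` to the fiber has the Borsuk–Ulam property with respect to `τ̄_j`. -/
theorem stmt18 (f : Torus3 → Torus3) (hfc : Continuous f) (hfib : ∀ w, (f w).2.2 = w.2.2) :
    ((∀ g : Torus3 → Torus3, Continuous g →
      (∃ H : Torus3 × I → Torus3, Continuous H ∧ (∀ w, H (w, 0) = f w) ∧
        (∀ w, H (w, 1) = g w) ∧ ∀ w t, (H (w, t)).2.2 = w.2.2) →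
      ∃ w : Torus3, g (w.1 + ((1 / 2 : ℝ) : UnitAddCircle), w.2.1, w.2.2) = g w) ↔
    (∀ h : Torus2 → Torus2, Continuous h →
      (∃ K : Torus2 × I → Torus2, Continuous K ∧
        (∀ u : Torus2, K (u, 0) =
          ((f (u.1, u.2, 0)).1, (f (u.1, u.2, 0)).2.1)) ∧
        ∀ u, K (u, 1) = h u) →
      ∃ u : Torus2, h (u.1 + ((1 / 2 : ℝ) : UnitAddCircle), u.2) = h u)) ∧
    ((∀ g : Torus3 → Torus3, Continuous g →
      (∃ H : Torus3 × I → Torus3, Continuous H ∧ (∀ w, H (w, 0) = f w) ∧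
        (∀ w, H (w, 1) = g w) ∧ ∀ w t, (H (w, t)).2.2 = w.2.2) →
      ∃ w : Torus3,
        g (w.1 + ((1 / 2 : ℝ) : UnitAddCircle),
          ((1 / 2 : ℝ) : UnitAddCircle) - w.2.1, w.2.2) = g w) ↔
    (∀ h : Torus2 → Torus2, Continuous h →
      (∃ K : Torus2 × I → Torus2, Continuous K ∧
        (∀ u : Torus2, K (u, 0) =
          ((f (u.1, u.2, 0)).1, (f (u.1, u.2, 0)).2.1)) ∧
        ∀ u, K (u, 1) = h u) →
      ∃ u : Torus2,
        h (u.1 + ((1 / 2 : ℝ) : UnitAddCircle),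
          ((1 / 2 : ℝ) : UnitAddCircle) - u.2) = h u)) := by
  let assoc : Torus3 ≃ₜ Torus2 × UnitAddCircle := (Homeomorph.prodAssoc _ _ _).symm
  exact ⟨stmt18_general isCoveringMap_torus2 assoc assoc
      (fun u => (u.1 + (1 / 2 : ℝ), u.2)) hfc hfib,
    stmt18_general isCoveringMap_torus2 assoc assoc
      (fun u => (u.1 + (1 / 2 : ℝ), (1 / 2 : ℝ) - u.2)) hfc hfib⟩
end

section
/- Let T² = (ℝ/ℤ)², and let MA be the quotient of T² × [0,1] by the identification ((x,y),0) ∼ ((x+y,y),1), the 2-torus bundle over S¹ = ℝ/ℤ with monodromy matrix A = [[1,1],[0,1]], with projection p : MA → S¹, p[((x,y),t)] = [t]. Let τ : MA → MA be the free involution over S¹ given by τ[((x,y),t)] = [((x + 1/2, y), t)]. For integers r, s, u, v, let f_{r,s,u,v} : MA → MA be the (well-defined) continuous map over S¹ given by f_{r,s,u,v}[((x,y),t)] = [((r·x + s·y + u·t, r·y + v·t), t)]. Then the homotopy class of f_{r,s,u,v} over S¹ has the Borsuk–Ulam property with respect to τ (every g homotopic to f_{r,s,u,v} through maps over S¹ satisfies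 g(τ(w)) = g(w) for some w ∈ MA) if and only if r is even. -/
open unitInterval

/-- The gluing relation of the mapping torus of the torus homeomorphism
`A(x,y) = (x + y, y)`, i.e. `((x,y),0) ∼ ((x+y,y),1)`. -/
def maRel : (Torus2 × unitInterval) → (Torus2 × unitInterval) → Prop :=
  fun a b => a.2 = 0 ∧ b.2 = 1 ∧ b.1 = (a.1.1 + a.1.2, a.1.2)

/-- The torus bundle `MA` over `S¹` with monodromy matrix `[[1,1],[0,1]]`. -/
abbrev MABundle : Type := Quot maRel

/-! In the fibres of `MA`, `f(τ w) - f(w) = (r/2, 0)`, so `f` itself has no coincidence when `r` is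
odd. When `r` is even, a homotopy from `f` to `g` yields a null-homotopy of `g(τ w) - g(w)`, which
lifts to a section of the plane bundle over `MA` with monodromy `A`, odd under `τ`. Shearing by `-t`
trivialises that bundle, so a section without zeros would be a map `Z : MA → ℂ ∖ {0}` with
`Z ∘ τ = -Z`. In `π₁(MA)` the class `α` of the first fibre circle is the commutator of `c` and `β`,
so `Z` has winding number `0` along `α`; oddness under the half turn of `α` forces that winding
number to be odd. -/

section Covering

lemma eq_of_exp_comp_eq_const {X : Type*} [TopologicalSpace X] [PreconnectedSpace X] {φ : X → ℂ}
    (hφ : Continuous φ) {c : ℂ} (h : ∀ x, Complex.exp (φ x) = c) (x y : X) : φ x = φ y :=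
  Complex.isCoveringMap_exp.const_of_comp hφ
    (fun x y => Subtype.ext ((h x).trans (h y).symm)) x y

lemma exists_continuous_exp_comp_eq {X : Type*} [TopologicalSpace X] [SimplyConnectedSpace X]
    [LocallyPathConnectedSpace X] {Z : X → ℂ} (hZ : Continuous Z) (hZ₀ : ∀ x, Z x ≠ 0) :
    ∃ L : X → ℂ, Continuous L ∧ ∀ x, Complex.exp (L x) = Z x := by
  obtain ⟨x₀⟩ : Nonempty X := inferInstance
  obtain ⟨L, ⟨-, hL⟩, -⟩ := Complex.isCoveringMapOn_exp.existsUnique_continuousMap_lifts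
    ⟨Z, hZ⟩ (Complex.exp_log (hZ₀ x₀)) hZ₀
  exact ⟨L, L.continuous, congrFun hL⟩

lemma isDiscrete_prod {X Y : Type*} [TopologicalSpace X] [TopologicalSpace Y] {s : Set X}
    {t : Set Y} (hs : IsDiscrete s) (ht : IsDiscrete t) : IsDiscrete (s ×ˢ t) := by
  rw [isDiscrete_iff_nhdsWithin] at *
  rintro ⟨x, y⟩ ⟨hx, hy⟩
  rw [nhdsWithin_prod_eq, hs x hx, ht y hy, Filter.prod_pure_pure]

/-- The universal covering homomorphism of the 2-torus. -/
def torusProj : ℝ × ℝ →+ Torus2 :=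
  (QuotientAddGroup.mk' _).prodMap (QuotientAddGroup.mk' _)

lemma isCoveringMap_torusProj : IsCoveringMap torusProj := by
  have isQuotientMap : Topology.IsQuotientMap torusProj :=
    (QuotientAddGroup.isOpenQuotientMap_mk.prodMap
      QuotientAddGroup.isOpenQuotientMap_mk).isQuotientMap
  refine (isQuotientMap.isAddQuotientCoveringMap_of_isDiscrete_ker_addMonoidHom
    ?_).isCoveringMap
  have discrete : IsDiscrete (AddSubgroup.zmultiples (1 : ℝ) : Set ℝ) :=
    ⟨NormedSpace.discreteTopology_zmultiples 1⟩
  rw [torusProj, AddMonoidHom.ker_prodMap, QuotientAddGroup.ker_mk']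
  exact isDiscrete_prod discrete discrete

end Covering

section Shear

/-- The monodromy `(x, y) ↦ (x + y, y)`, over any commutative group so as to act on the torus and
on its universal cover alike. -/
def shear {M : Type*} [AddCommGroup M] : M × M →+ M × M :=
  (AddMonoidHom.fst M M + AddMonoidHom.snd M M).prod (AddMonoidHom.snd M M)

lemma shear_apply {M : Type*} [AddCommGroup M] (a : M × M) : shear a = (a.1 + a.2, a.2) :=
  rfl

lemma continuous_shear {M : Type*} [AddCommGroup M] [TopologicalSpace M] [ContinuousAdd M] :
    Continuous (shear : M × M → M × M) := by
  simp only [funext shear_apply]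
  fun_prop

lemma torusProj_shear (x : ℝ × ℝ) : torusProj (shear x) = shear (torusProj x) :=
  rfl

/-- The involution of the fibre `T²` that `τ` restricts to. -/
noncomputable def halfTurn (a : Torus2) : Torus2 :=
  (a.1 + ((1 / 2 : ℝ) : UnitAddCircle), a.2)

lemma continuous_halfTurn : Continuous halfTurn := by
  unfold halfTurn
  fun_prop

lemma halfTurn_halfTurn (a : Torus2) : halfTurn (halfTurn a) = a := by
  have half_add_half : ((1 / 2 : ℝ) : UnitAddCircle) + ((1 / 2 : ℝ) : UnitAddCircle) = 0 := by
    rw [← AddCircle.coe_add, add_halves, AddCircle.coe_period]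
  simp only [halfTurn, add_assoc, half_add_half, add_zero]

lemma shear_halfTurn (a : Torus2) : shear (halfTurn a) = halfTurn (shear a) :=
  Prod.ext (add_right_comm _ _ _) rfl

lemma torusProj_add_half (x : ℝ × ℝ) : torusProj (x + (1 / 2, 0)) = halfTurn (torusProj x) :=
  Prod.ext rfl (congrArg (fun y : ℝ => (y : UnitAddCircle)) (add_zero x.2))

lemma torusProj_add_one_zero (x : ℝ × ℝ) : torusProj (x + (1, 0)) = torusProj x := by
  have two_halves : x + (1, 0) = x + (1 / 2, 0) + (1 / 2, 0) := by
    rw [add_assoc, Prod.mk_add_mk (1 / 2 : ℝ), add_halves, add_zero]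
  rw [two_halves, torusProj_add_half, torusProj_add_half, halfTurn_halfTurn]

lemma torusProj_add_zero_one (x : ℝ × ℝ) : torusProj (x + (0, 1)) = torusProj x := by
  rw [map_add]
  exact add_eq_left.2 (Prod.ext (AddCircle.coe_zero _) (AddCircle.coe_period _))

end Shear

section OddMaps

lemma exists_periodic_log {Z : Torus2 × I → ℂ} (hZ : Continuous Z) (hZ₀ : ∀ w, Z w ≠ 0)
    (hshear : ∀ a, Z (shear a, 1) = Z (a, 0)) :
    ∃ L : (ℝ × ℝ) × I → ℂ, Continuous L ∧ (∀ x t, Complex.exp (L (x, t)) = Z (torusProj x, t)) ∧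
      ∀ x t, L (x + (1, 0), t) = L (x, t) := by
  have hproj := isCoveringMap_torusProj.continuous
  obtain ⟨L', hL', hexp'⟩ := exists_continuous_exp_comp_eq
    (Z := fun x : (ℝ × ℝ) × ℝ => Z (torusProj x.1, Set.projIcc 0 1 zero_le_one x.2))
    (by fun_prop) (fun _ => hZ₀ _)
  let L : (ℝ × ℝ) × I → ℂ := fun x => L' (x.1, x.2)
  have hL : Continuous L := by fun_prop
  have hexp (x t) : Complex.exp (L (x, t)) = Z (torusProj x, t) := by
    simp only [L, hexp', Set.projIcc_val]
  have period {n : ℝ × ℝ} (hn : ∀ x, torusProj (x + n) = torusProj x) (x y : (ℝ × ℝ) × I) :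
      L (x.1 + n, x.2) - L x = L (y.1 + n, y.2) - L y := by
    refine eq_of_exp_comp_eq_const (φ := fun x => L (x.1 + n, x.2) - L x) (by fun_prop) (c := 1)
      (fun x => ?_) x y
    rw [Complex.exp_sub, hexp, hexp, hn, div_self (hZ₀ _)]
  have monodromy (x y : ℝ × ℝ) : L (shear x, 1) - L (x, 0) = L (shear y, 1) - L (y, 0) := by
    have hcont := continuous_shear (M := ℝ)
    refine eq_of_exp_comp_eq_const (φ := fun x => L (shear x, 1) - L (x, 0)) (by fun_prop) (c := 1)
      (fun x => ?_) x y
    rw [Complex.exp_sub, hexp, hexp, torusProj_shear, hshear, div_self (hZ₀ _)]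
  refine ⟨L, hL, hexp, fun x t => ?_⟩
  -- Since `A e₂ = e₁ + e₂`, invariance under `A` makes `e₂` and `e₁ + e₂` have equal periods.
  have along_e₁ := period torusProj_add_one_zero (x, t) ((0, 1), 1)
  have along_e₂ := period torusProj_add_zero_one (0, 0) (0, 1)
  have along_c := monodromy (0, 1) 0
  simp only [shear_apply, Prod.mk_add_mk, zero_add, add_zero, Prod.fst_zero, Prod.snd_zero,
    Prod.mk_zero_zero] at along_e₁ along_e₂ along_c
  linear_combination along_e₁ + along_c + along_e₂

lemma eq_one_of_halfTurn_eq_mul {Z : Torus2 × I → ℂ} (hZ : Continuous Z) (hZ₀ : ∀ w, Z w ≠ 0)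
    (hshear : ∀ a, Z (shear a, 1) = Z (a, 0)) {c : ℂ}
    (hhalf : ∀ a t, Z (halfTurn a, t) = c * Z (a, t)) : c = 1 := by
  obtain ⟨L, hL, hexp, hperiod⟩ := exists_periodic_log hZ hZ₀ hshear
  let k : ℝ × ℝ → ℂ := fun x => L (x + (1 / 2, 0), 0) - L (x, 0)
  have exp_k (x) : Complex.exp (k x) = c := by
    rw [Complex.exp_sub, hexp, hexp, torusProj_add_half, hhalf, mul_div_cancel_right₀ _ (hZ₀ _)]
  have k_half : k (1 / 2, 0) = k 0 := eq_of_exp_comp_eq_const (by fun_prop) exp_k _ _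
  have k_add : k (1 / 2, 0) + k 0 = 0 := by
    have := hperiod 0 0
    simp only [k, zero_add, Prod.mk_add_mk, add_halves, add_zero] at this ⊢
    linear_combination this
  have k_zero : k 0 = 0 := self_eq_neg.1 (by linear_combination k_add - k_half)
  rw [← exp_k 0, k_zero, Complex.exp_zero]

lemma exists_eq_zero_of_odd {F : Torus2 × I → ℝ × ℝ} (hF : Continuous F)
    (hodd : ∀ a t, F (halfTurn a, t) = -F (a, t))
    (hshear : ∀ a, F (shear a, 1) = shear (F (a, 0))) : ∃ w, F w = 0 := by
  by_contra! hne
  -- The linear maps `(x, y) ↦ (x - t y, y)` join the identity to the inverse monodromy.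
  let Z : Torus2 × I → ℂ := fun w => Complex.equivRealProdCLM.symm
    ((F w).1 - w.2 * (F w).2, (F w).2)
  have hZ : Continuous Z := by fun_prop
  have hZ₀ (w) : Z w ≠ 0 := fun h => by
    obtain ⟨h₁, h₂⟩ := Prod.ext_iff.1 ((map_eq_zero_iff _ (ContinuousLinearEquiv.injective _)).1 h)
    change (F w).2 = 0 at h₂
    exact hne w (Prod.ext (by simpa [h₂] using h₁) h₂)
  have Z_shear (a) : Z (shear a, 1) = Z (a, 0) := by
    simp only [Z, hshear]
    simp [shear_apply]
  have Z_odd (a t) : Z (halfTurn a, t) = -1 * Z (a, t) := by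
    rw [neg_one_mul, ← map_neg]
    simp only [Z, hodd, Prod.fst_neg, Prod.snd_neg, Prod.neg_mk]
    ring_nf
  exact absurd (eq_one_of_halfTurn_eq_mul hZ hZ₀ Z_shear Z_odd) (by norm_num)

lemma exists_eq_zero_of_odd_nullhomotopy {D : I × (Torus2 × I) → Torus2} (hD : Continuous D)
    (hzero : ∀ w, D (0, w) = 0) (hodd : ∀ ζ a t, D (ζ, halfTurn a, t) = -D (ζ, a, t))
    (hshear : ∀ ζ a, D (ζ, shear a, 1) = shear (D (ζ, a, 0))) : ∃ w, D (1, w) = 0 := by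
  have cov := isCoveringMap_torusProj
  let E := cov.liftHomotopy ⟨D, hD⟩ (.const _ 0) (fun w => by simp [hzero])
  have hE : Continuous E := E.continuous
  have E_lifts (z) : torusProj (E z) = D z := congrFun (cov.liftHomotopy_lifts ..) z
  have E_zero (w) : E (0, w) = 0 := cov.liftHomotopy_zero ..
  have E_odd (a t) : E (1, halfTurn a, t) = -E (1, a, t) := by
    refine congrFun (cov.eq_of_comp_eq (g₁ := fun ζ => E (ζ, halfTurn a, t))
      (g₂ := fun ζ => -E (ζ, a, t)) (by fun_prop) (by fun_prop) (funext fun ζ => ?_) 0 ?_) 1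
    · simp only [Function.comp_apply, map_neg, E_lifts, hodd]
    · simp only [E_zero, neg_zero]
  have E_shear (a) : E (1, shear a, 1) = shear (E (1, a, 0)) := by
    have hcont := continuous_shear (M := ℝ)
    refine congrFun (cov.eq_of_comp_eq (g₁ := fun ζ => E (ζ, shear a, 1))
      (g₂ := fun ζ => shear (E (ζ, a, 0))) (by fun_prop) (by fun_prop) (funext fun ζ => ?_) 0 ?_) 1
    · simp only [Function.comp_apply, torusProj_shear, E_lifts, hshear]
    · simp only [E_zero, map_zero]
  obtain ⟨w, hw⟩ := exists_eq_zero_of_odd (F := fun w => E (1, w)) (by fun_prop) E_odd E_shear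
  exact ⟨w, by rw [← E_lifts, hw, map_zero]⟩

lemma exists_halfTurn_eq_of_homotopy {K : I × (Torus2 × I) → Torus2} (hK : Continuous K)
    (hzero : ∀ a t, K (0, halfTurn a, t) = K (0, a, t))
    (hshear : ∀ ζ a, K (ζ, shear a, 1) = shear (K (ζ, a, 0))) :
    ∃ a t, K (1, halfTurn a, t) = K (1, a, t) := by
  have hcont := continuous_halfTurn
  obtain ⟨⟨a, t⟩, h⟩ := exists_eq_zero_of_odd_nullhomotopy
    (D := fun z => K (z.1, halfTurn z.2.1, z.2.2) - K z) (by fun_prop)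
    (fun w => sub_eq_zero.2 (hzero w.1 w.2))
    (fun ζ a t => by simp only [halfTurn_halfTurn, neg_sub])
    (fun ζ a => by simp only [← shear_halfTurn, hshear, map_sub])
  exact ⟨a, t, sub_eq_zero.1 h⟩

end OddMaps

section FibreCoordinates

open AddCircle

lemma mk_zero_eq_mk_shear_one (a : Torus2) :
    Quot.mk maRel (a, 0) = Quot.mk maRel (shear a, 1) :=
  Quot.sound ⟨rfl, rfl, rfl⟩

/-- A map to a Hausdorff space that is compatible with the gluing of `MA` and injective on each
fibre. The second entry degenerates over `t = 0` and `t = 1`, where the third recovers `x + y`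
and `x` respectively. -/
noncomputable def fibreSeparator (w : Torus2 × I) : UnitAddCircle × ℂ × ℂ :=
  (w.1.2, (w.2 * (1 - w.2) : ℝ) * toCircle w.1.1,
    (1 - w.2 : ℝ) * toCircle (w.1.1 + w.1.2) + (w.2 : ℝ) * toCircle w.1.1)

lemma continuous_fibreSeparator : Continuous fibreSeparator := by
  have := continuous_toCircle (T := 1)
  unfold fibreSeparator
  fun_prop

lemma fibreSeparator_eq_of_maRel {z w : Torus2 × I} (h : maRel z w) :
    fibreSeparator z = fibreSeparator w := by
  obtain ⟨a, t⟩ := z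
  obtain ⟨b, t'⟩ := w
  obtain ⟨rfl : t = 0, rfl : t' = 1, rfl : b = _⟩ := h
  simp [fibreSeparator]

lemma fibreSeparator_injective_left (t : I) :
    Function.Injective fun a : Torus2 => fibreSeparator (a, t) := by
  have inj : Function.Injective fun x : UnitAddCircle => (toCircle x : ℂ) :=
    Subtype.val_injective.comp (injective_toCircle one_ne_zero)
  rintro ⟨x, y⟩ ⟨x', y'⟩ h
  simp only [fibreSeparator, Prod.mk.injEq] at h
  obtain ⟨rfl, h₂, h₃⟩ := h
  congr 1
  by_cases ht₀ : (t : ℝ) = 0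
  · exact add_right_cancel (inj (by simpa [ht₀] using h₃))
  by_cases ht₁ : (t : ℝ) = 1
  · exact inj (by simpa [ht₁] using h₃)
  have ht : (t * (1 - t) : ℝ) ≠ 0 := mul_ne_zero ht₀ (sub_ne_zero.2 (Ne.symm ht₁))
  exact inj (mul_left_cancel₀ (Complex.ofReal_ne_zero.2 ht) h₂)

lemma mk_injective_left (t : I) :
    Function.Injective fun a : Torus2 => Quot.mk maRel (a, t) := fun _ _ h =>
  fibreSeparator_injective_left t
    (congrArg (Quot.lift fibreSeparator fun _ _ => fibreSeparator_eq_of_maRel) h)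

lemma eq_or_endpoints_of_coe_eq {t t' : I}
    (h : ((t : ℝ) : UnitAddCircle) = ((t' : ℝ) : UnitAddCircle)) :
    t = t' ∨ (t = 0 ∧ t' = 1) ∨ (t = 1 ∧ t' = 0) := by
  have coe_inj {s s' : I} (hs : s < 1) (hs' : s' < 1)
      (h : ((s : ℝ) : UnitAddCircle) = ((s' : ℝ) : UnitAddCircle)) : s = s' :=
    Subtype.ext ((coe_eq_coe_iff_of_mem_Ico (p := (1 : ℝ)) (a := 0)
      ⟨s.2.1, by rwa [zero_add]⟩ ⟨s'.2.1, by rwa [zero_add]⟩).1 h)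
  have coe_one : (((1 : I) : ℝ) : UnitAddCircle) = (((0 : I) : ℝ) : UnitAddCircle) := by
    rw [Set.Icc.coe_one, Set.Icc.coe_zero, coe_period, AddCircle.coe_zero]
  rcases unitInterval.le_one'.lt_or_eq (a := t) with ht | rfl <;>
    rcases unitInterval.le_one'.lt_or_eq (a := t') with ht' | rfl
  · exact .inl (coe_inj ht ht' h)
  · exact .inr (.inl ⟨coe_inj ht zero_lt_one (h.trans coe_one), rfl⟩)
  · exact .inr (.inr ⟨rfl, coe_inj ht' zero_lt_one (h.symm.trans coe_one)⟩)
  · exact .inl rfl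

variable {p : MABundle → UnitAddCircle}

lemma exists_eq_mk_of_proj_eq (hp : ∀ a t, p (Quot.mk maRel (a, t)) = ((t : ℝ) : UnitAddCircle))
    {w : MABundle} {t : I} (h : p w = ((t : ℝ) : UnitAddCircle)) :
    ∃ a : Torus2, w = Quot.mk maRel (a, t) := by
  obtain ⟨⟨a, t'⟩, rfl⟩ := Quot.exists_rep w
  rcases eq_or_endpoints_of_coe_eq ((hp a t').symm.trans h) with rfl | ⟨rfl, rfl⟩ | ⟨rfl, rfl⟩
  · exact ⟨a, rfl⟩
  · exact ⟨shear a, mk_zero_eq_mk_shear_one a⟩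
  · refine ⟨(a.1 - a.2, a.2), ?_⟩
    rw [mk_zero_eq_mk_shear_one, shear_apply, sub_add_cancel]

lemma exists_continuous_fibreCoord
    (hp : ∀ a t, p (Quot.mk maRel (a, t)) = ((t : ℝ) : UnitAddCircle))
    {Y : Type*} [TopologicalSpace Y] {q : Y → MABundle} (hq : Continuous q) {t : Y → I}
    (ht : Continuous t) (h : ∀ y, p (q y) = ((t y : ℝ) : UnitAddCircle)) :
    ∃ G : Y → Torus2, Continuous G ∧ ∀ y, q y = Quot.mk maRel (G y, t y) := by
  choose G hG using fun y => exists_eq_mk_of_proj_eq hp (h y)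
  let Φ : Torus2 × I → (UnitAddCircle × ℂ × ℂ) × I := fun w => (fibreSeparator w, w.2)
  have Φ_injective : Function.Injective Φ := by
    rintro ⟨a, t⟩ ⟨b, t'⟩ hab
    obtain ⟨hsep, rfl : t = t'⟩ := Prod.mk.inj hab
    rw [fibreSeparator_injective_left t hsep]
  have Φ_embedding := (continuous_fibreSeparator.prodMk continuous_snd).isClosedEmbedding
    Φ_injective
  have sep_q : Continuous fun y => fibreSeparator (G y, t y) := by
    have lift_continuous : Continuous
        (Quot.lift fibreSeparator fun _ _ => fibreSeparator_eq_of_maRel : MABundle → _) :=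
      continuous_quot_lift _ continuous_fibreSeparator
    simpa only [Function.comp_def, hG] using lift_continuous.comp hq
  have hGt : Continuous fun y => (G y, t y) :=
    Φ_embedding.isInducing.continuous_iff.2 (sep_q.prodMk ht)
  exact ⟨G, continuous_fst.comp hGt, hG⟩

end FibreCoordinates

section Coincidences

variable {p : MABundle → UnitAddCircle} {τ : MABundle → MABundle}

lemma exists_coincidence_of_homotopy
    (hp : ∀ a t, p (Quot.mk maRel (a, t)) = ((t : ℝ) : UnitAddCircle))
    (hτ : ∀ a t, τ (Quot.mk maRel (a, t)) = Quot.mk maRel (halfTurn a, t))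
    {H : MABundle × I → MABundle} (hH : Continuous H) (hpH : ∀ w ζ, p (H (w, ζ)) = p w)
    (hzero : ∀ w, H (τ w, 0) = H (w, 0)) : ∃ w, H (τ w, 1) = H (w, 1) := by
  obtain ⟨K, hK, hHK⟩ := exists_continuous_fibreCoord hp
    (q := fun y : I × (Torus2 × I) => H (Quot.mk maRel y.2, y.1)) (t := fun y => y.2.2)
    (hH.comp ((continuous_quot_mk.comp continuous_snd).prodMk continuous_fst)) (by fun_prop)
    (fun y => (hpH _ _).trans (hp _ _))
  have K_zero (a t) : K (0, halfTurn a, t) = K (0, a, t) := by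
    apply mk_injective_left t
    simpa only [hτ, ← hHK] using hzero (Quot.mk maRel (a, t))
  have K_shear (ζ a) : K (ζ, shear a, 1) = shear (K (ζ, a, 0)) := by
    apply mk_injective_left 1
    simp only [← mk_zero_eq_mk_shear_one, ← hHK (ζ, shear a, 1), ← hHK (ζ, a, 0)]
  obtain ⟨a, t, hK₁⟩ := exists_halfTurn_eq_of_homotopy hK K_zero K_shear
  refine ⟨Quot.mk maRel (a, t), ?_⟩
  rw [hτ, hHK (1, halfTurn a, t), hHK (1, a, t), hK₁]

lemma zsmul_half_eq_zero_iff_even (r : ℤ) :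
    r • ((1 / 2 : ℝ) : UnitAddCircle) = 0 ↔ Even r := by
  have order_two : addOrderOf ((1 / 2 : ℝ) : UnitAddCircle) = 2 := by
    exact_mod_cast AddCircle.addOrderOf_period_div (p := (1 : ℝ)) two_pos
  rw [← addOrderOf_dvd_iff_zsmul_eq_zero, order_two, even_iff_two_dvd, Nat.cast_ofNat]

lemma apply_involution_eq_iff_even {r s : ℤ} {b : I → Torus2} {f : MABundle → MABundle}
    (hτ : ∀ a t, τ (Quot.mk maRel (a, t)) = Quot.mk maRel (halfTurn a, t))
    (hf : ∀ a t, f (Quot.mk maRel (a, t)) =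
      Quot.mk maRel ((r • a.1 + s • a.2 + (b t).1, r • a.2 + (b t).2), t))
    (w : MABundle) : f (τ w) = f w ↔ Even r := by
  obtain ⟨⟨a, t⟩, rfl⟩ := Quot.exists_rep w
  rw [hτ, hf, hf, (mk_injective_left t).eq_iff, ← zsmul_half_eq_zero_iff_even]
  simp only [halfTurn, Prod.mk.injEq, and_true, smul_add, add_left_inj, add_eq_left]

end Coincidences

/-- For the torus bundle `MA` over `S¹` with monodromy `[[1,1],[0,1]]`,
its unique free involution `τ[((x,y),t)] = [((x+1/2,y),t)]` over `S¹`, and the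
fiber-preserving map `f[((x,y),t)] = [((rx+sy+ut, ry+vt), t)]`, the homotopy class of `f`
over `S¹` has the Borsuk–Ulam property with respect to `τ` iff `r` is even. -/
theorem stmt19 (r s u v : ℤ)
    (p : MABundle → UnitAddCircle) (hpc : Continuous p)
    (hp : ∀ (a : Torus2) (t : unitInterval),
      p (Quot.mk maRel (a, t)) = ((t : ℝ) : UnitAddCircle))
    (τ : MABundle → MABundle) (hτc : Continuous τ)
    (hτ : ∀ (a : Torus2) (t : unitInterval), τ (Quot.mk maRel (a, t)) =
      Quot.mk maRel ((a.1 + ((1 / 2 : ℝ) : UnitAddCircle), a.2), t))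
    (f : MABundle → MABundle) (hfc : Continuous f)
    (hf : ∀ (a : Torus2) (t : unitInterval), f (Quot.mk maRel (a, t)) =
      Quot.mk maRel ((r • a.1 + s • a.2 + (((u : ℝ) * (t : ℝ) : ℝ) : UnitAddCircle),
        r • a.2 + (((v : ℝ) * (t : ℝ) : ℝ) : UnitAddCircle)), t)) :
    (∀ g : MABundle → MABundle, Continuous g →
      (∃ H : MABundle × unitInterval → MABundle, Continuous H ∧
        (∀ w, H (w, 0) = f w) ∧ (∀ w, H (w, 1) = g w) ∧
        ∀ w t, p (H (w, t)) = p w) →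
      ∃ w : MABundle, g (τ w) = g w) ↔ Even r := by
  have f_even_iff := apply_involution_eq_iff_even
    (b := fun t => (((u * t : ℝ) : UnitAddCircle), ((v * t : ℝ) : UnitAddCircle))) hτ hf
  constructor
  · intro hBU
    have f_over (w) : p (f w) = p w := by
      obtain ⟨⟨a, t⟩, rfl⟩ := Quot.exists_rep w
      rw [hf, hp, hp]
    obtain ⟨w, hw⟩ := hBU f hfc
      ⟨fun z => f z.1, hfc.comp continuous_fst, fun _ => rfl, fun _ => rfl, fun w _ => f_over w⟩
    exact (f_even_iff w).1 hw
  · rintro hr g - ⟨H, hH, H_zero, H_one, H_over⟩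
    simp only [← H_one]
    exact exists_coincidence_of_homotopy hp hτ hH H_over fun w => by
      rw [H_zero, H_zero, (f_even_iff w).2 hr]
end
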